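/- There exists a finite set Λ_u ⊂ S² ∩ ℚ³ of rational unit vectors, disjoint from the set Λ_B = {(1,0,0), (0,1,0), (0,0,1), (3/5, 4/5, 0), (0, −4/5, −3/5)}, for each k ∈ Λ_u a pair of vectors k₁, k₂ ∈ ℝ³ such that (k, k₁, k₂) is an orthonormal basis of ℝ³, a constant ε_u > 0, and smooth functions γ_(k) : B_{ε_u}(Id) → ℝ that are strictly positive on B_{ε_u}(Id), where B_{ε_u}(Id) is the open ball of radius ε_u (in the Frobenius norm) centered at the identity matrix in the space of 3×3 real symmetric matrices, such that for every symmetric 3×3 matrix S with |S − Id| < ε_u one has the identity S = Σ_{k ∈ Λ_u} γ_(k)(S)² (k₁ ⊗ k₁). -/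

import Mathlib

/-!
STATEMENT 3: The Second Geometric Lemma.
There is a finite set Λ_u of rational unit vectors k, disjoint from the explicit set Λ_B,
with associated orthonormal bases (k, k₁, k₂), a radius ε_u > 0, and smooth strictly
positive functions γ_(k) on the ball B_{ε_u}(Id) (Frobenius norm) in the space of 3×3
symmetric matrices, such that every symmetric S with |S − Id| < ε_u satisfies
  S = Σ_{k ∈ Λ_u} γ_(k)(S)² (k₁ ⊗ k₁).
Here `Matrix.vecMulVec v w` is the tensor product v ⊗ w.
-/

noncomputable section

open Matrix

attribute [local instance] Matrix.normedAddCommGroup Matrix.normedSpace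

/-- Frobenius norm of a 3×3 real matrix. -/
def fnorm (A : Matrix (Fin 3) (Fin 3) ℝ) : ℝ := Real.sqrt (∑ i, ∑ j, (A i j) ^ 2)

/-- `(k, k₁, k₂)` is an orthonormal basis of ℝ³ (w.r.t. the Euclidean inner product). -/
def IsONBasis (k k₁ k₂ : Fin 3 → ℝ) : Prop :=
  (∑ i, k i ^ 2 = 1) ∧ (∑ i, k₁ i ^ 2 = 1) ∧ (∑ i, k₂ i ^ 2 = 1) ∧
  (∑ i, k i * k₁ i = 0) ∧ (∑ i, k i * k₂ i = 0) ∧ (∑ i, k₁ i * k₂ i = 0)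

/-- The explicit wavevector set Λ_B of the first geometric lemma. -/
def ΛBset : Set (Fin 3 → ℝ) :=
  {![1, 0, 0], ![0, 1, 0], ![0, 0, 1], ![3/5, 4/5, 0], ![0, -4/5, -3/5]}

def sglK : Fin 6 → (Fin 3 → ℝ) :=
  ![![4/5, 3/5, 0], ![4/5, -3/5, 0], ![0, 4/5, 3/5], ![0, 4/5, -3/5],
    ![3/5, 0, 4/5], ![-3/5, 0, 4/5]]

def sglK1 : Fin 6 → (Fin 3 → ℝ) :=
  ![![3/5, -4/5, 0], ![3/5, 4/5, 0], ![0, 3/5, -4/5], ![0, 3/5, 4/5],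
    ![-4/5, 0, 3/5], ![4/5, 0, 3/5]]

def sglK2 : Fin 6 → (Fin 3 → ℝ) :=
  ![![0, 0, 1], ![0, 0, 1], ![1, 0, 0], ![1, 0, 0], ![0, 1, 0], ![0, 1, 0]]

/-- The coefficients of the decomposition: linear functions of the matrix. -/
def sglC (n : Fin 6) (S : Matrix (Fin 3) (Fin 3) ℝ) : ℝ :=
  ![(81 * S 0 0 + 256 * S 1 1 - 144 * S 2 2) / 386 - 25 / 24 * S 0 1,
    (81 * S 0 0 + 256 * S 1 1 - 144 * S 2 2) / 386 + 25 / 24 * S 0 1,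
    (81 * S 1 1 + 256 * S 2 2 - 144 * S 0 0) / 386 - 25 / 24 * S 1 2,
    (81 * S 1 1 + 256 * S 2 2 - 144 * S 0 0) / 386 + 25 / 24 * S 1 2,
    (81 * S 2 2 + 256 * S 0 0 - 144 * S 1 1) / 386 - 25 / 24 * S 0 2,
    (81 * S 2 2 + 256 * S 0 0 - 144 * S 1 1) / 386 + 25 / 24 * S 0 2] n

lemma sgl_two (a b c : ℝ) : (![a, b, c] : Fin 3 → ℝ) 2 = c := rfl

lemma sglK_inj : Function.Injective sglK := by
  intro i j h
  have h0 := congrFun h 0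
  have h1 := congrFun h 1
  have h2 := congrFun h 2
  have hh := And.intro h0 (And.intro h1 h2)
  clear h h0 h1 h2
  fin_cases i <;> fin_cases j <;> first
    | rfl
    | norm_num [sglK, sgl_two] at hh

lemma sgl_entry (A : Matrix (Fin 3) (Fin 3) ℝ) (h : fnorm A < 1/10) (i j : Fin 3) :
    |A i j| < 1/10 := by
  refine lt_of_le_of_lt ?_ h
  unfold fnorm
  apply Real.le_sqrt_of_sq_le
  rw [sq_abs]
  calc (A i j)^2 ≤ ∑ j, (A i j)^2 :=
        Finset.single_le_sum (f := fun j => (A i j)^2) (fun _ _ => sq_nonneg _) (Finset.mem_univ j)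
    _ ≤ _ := Finset.single_le_sum (f := fun i => ∑ j, (A i j)^2)
        (fun _ _ => Finset.sum_nonneg fun _ _ => sq_nonneg _) (Finset.mem_univ i)

lemma sglC_pos (n : Fin 6) (S : Matrix (Fin 3) (Fin 3) ℝ) (h : fnorm (S - 1) < 1/10) :
    0 < sglC n S := by
  have e := fun i j => abs_lt.1 (sgl_entry _ h i j)
  have h00 := e 0 0
  have h11 := e 1 1
  have h22 := e 2 2
  have h01 := e 0 1
  have h02 := e 0 2
  have h12 := e 1 2
  simp at h00 h11 h22 h01 h02 h12
  obtain ⟨a1, a2⟩ := h00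
  obtain ⟨b1, b2⟩ := h11
  obtain ⟨c1, c2⟩ := h22
  obtain ⟨d1, d2⟩ := h01
  obtain ⟨e1, e2⟩ := h02
  obtain ⟨f1, f2⟩ := h12
  fin_cases n <;> simp [sglC] <;> linarith

lemma sglC_smooth (n : Fin 6) : ContDiff ℝ (⊤ : ℕ∞) (sglC n) := by
  have e : ∀ i j : Fin 3, ContDiff ℝ (⊤ : ℕ∞) (fun S : Matrix (Fin 3) (Fin 3) ℝ => S i j) :=
    fun i j => contDiff_apply_apply ℝ ℝ i j
  have h00 := e 0 0
  have h11 := e 1 1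
  have h22 := e 2 2
  have h01 := e 0 1
  have h02 := e 0 2
  have h12 := e 1 2
  unfold sglC
  fin_cases n <;> simp <;> fun_prop

theorem second_geometric_lemma :
    ∃ (Λu : Finset (Fin 3 → ℝ)) (k₁ k₂ : (Fin 3 → ℝ) → (Fin 3 → ℝ)) (εu : ℝ)
      (γ : (Fin 3 → ℝ) → Matrix (Fin 3) (Fin 3) ℝ → ℝ),
      0 < εu ∧ Λu.Nonempty ∧
      -- Λ_u is disjoint from Λ_B
      (∀ k ∈ Λu, k ∉ ΛBset) ∧
      -- the elements of Λ_u are rational unit vectors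
      (∀ k ∈ Λu, (∀ i, ∃ q : ℚ, k i = (q : ℝ)) ∧ ∑ i, k i ^ 2 = 1) ∧
      -- each k ∈ Λ_u comes with an orthonormal basis (k, k₁, k₂)
      (∀ k ∈ Λu, IsONBasis k (k₁ k) (k₂ k)) ∧
      -- the γ_(k) are smooth on the ball of radius ε_u around the identity
      (∀ k ∈ Λu, ContDiffOn ℝ (⊤ : ℕ∞) (γ k) {S | fnorm (S - 1) < εu}) ∧
      -- the γ_(k) are strictly positive on the symmetric matrices in that ball
      (∀ k ∈ Λu, ∀ S : Matrix (Fin 3) (Fin 3) ℝ, Sᵀ = S → fnorm (S - 1) < εu → 0 < γ k S) ∧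
      -- the decomposition identity on symmetric matrices with |S − Id| < ε_u
      (∀ S : Matrix (Fin 3) (Fin 3) ℝ, Sᵀ = S → fnorm (S - 1) < εu →
        S = ∑ k ∈ Λu, (γ k S) ^ 2 • vecMulVec (k₁ k) (k₁ k)) := by
  have inv : ∀ n, Function.invFun sglK (sglK n) = n := Function.leftInverse_invFun sglK_inj
  refine ⟨Finset.univ.map ⟨sglK, sglK_inj⟩, fun k => sglK1 (Function.invFun sglK k),
    fun k => sglK2 (Function.invFun sglK k), 1/10,
    fun k S => Real.sqrt (sglC (Function.invFun sglK k) S), by norm_num, by simp,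
    ?_, ?_, ?_, ?_, ?_, ?_⟩
  · simp only [Finset.mem_map, Finset.mem_univ, true_and, Function.Embedding.coeFn_mk]
    rintro _ ⟨n, rfl⟩ h
    simp only [ΛBset, Set.mem_insert_iff, Set.mem_singleton_iff] at h
    rcases h with h | h | h | h | h <;>
    · have h0 := congrFun h 0
      have h1 := congrFun h 1
      have h2 := congrFun h 2
      have hh := And.intro h0 (And.intro h1 h2)
      clear h h0 h1 h2
      fin_cases n <;> norm_num [sglK, sgl_two] at hh
  · simp only [Finset.mem_map, Finset.mem_univ, true_and, Function.Embedding.coeFn_mk]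
    rintro _ ⟨n, rfl⟩
    constructor
    · intro i
      refine ⟨(![![4/5, 3/5, 0], ![4/5, -3/5, 0], ![0, 4/5, 3/5], ![0, 4/5, -3/5],
        ![3/5, 0, 4/5], ![-3/5, 0, 4/5]] : Fin 6 → Fin 3 → ℚ) n i, ?_⟩
      fin_cases n <;> fin_cases i <;> norm_num [sglK]
    · fin_cases n <;> norm_num [sglK, Fin.sum_univ_three, sgl_two]
  · simp only [Finset.mem_map, Finset.mem_univ, true_and, Function.Embedding.coeFn_mk]
    rintro _ ⟨n, rfl⟩
    simp only [inv, IsONBasis]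
    fin_cases n <;> norm_num [sglK, sglK1, sglK2, Fin.sum_univ_three, sgl_two]
  · intro k _
    exact (sglC_smooth _).contDiffOn.sqrt fun S hS => (sglC_pos _ S hS).ne'
  · intro k _ S _ hS
    exact Real.sqrt_pos.2 (sglC_pos _ S hS)
  · intro S hT hS
    rw [Finset.sum_map]
    simp only [Function.Embedding.coeFn_mk, inv]
    simp only [fun n => Real.sq_sqrt (sglC_pos n S hS).le]
    have t10 : S 1 0 = S 0 1 := congrFun (congrFun hT 0) 1
    have t20 : S 2 0 = S 0 2 := congrFun (congrFun hT 0) 2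
    have t21 : S 2 1 = S 1 2 := congrFun (congrFun hT 1) 2
    ext i j
    simp only [Matrix.sum_apply, Matrix.smul_apply, vecMulVec_apply, smul_eq_mul,
      Fin.sum_univ_six]
    fin_cases i <;> fin_cases j <;> simp [sglC, sglK1, t10, t20, t21] <;> ring

end
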